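/- Let K be an algebraically closed field of characteristic 0, let f and g be nonconstant, relatively prime polynomials in K[t], set A = f² − g², B = 2fg, C = f² + g², and let w ∈ K[t] be a nonconstant polynomial. Suppose (x, y, z) is a solution in positive integers of (wA)^x + (wB)^y = (wC)^z with y < m, where m = min{x, z}. Then, writing δ(p) for the degree of a polynomial p: x·δ(A) ≤ δ(A) + δ(B) + δ(C) − 1, y·δ(B) < δ(A) + δ(B) + δ(C) + m·δ(w) − 1, and z·δ(C) ≤ δ(A) + δ(B) + δ(C) − 1. -/

import Mathlib

open Polynomial

/-!
Put `m = min x z`. Cancelling `w ^ y` turns the equation into `B ^ y = w ^ (m - y) * D` with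
`D = w ^ (z - m) * C ^ z - w ^ (x - m) * A ^ x`. Since `y < m`, `w` divides `B ^ y`, and as `A`,
`B`, `C` are pairwise coprime, `w` is coprime to `A` and `C`. One of the exponents `x - m`, `z - m`
vanishes, so the Mason–Stothers theorem applies to `w ^ (x - m) * A ^ x + D = w ^ (z - m) * C ^ z`.
Each of these three terms divides a power of `A * B * C`, hence has smaller degree than `A * B * C`.
-/

section CommRing

variable {R : Type*} [CommRing R]

theorem isCoprime_sub_add {a b : R} (hab : IsCoprime a b) (h2 : IsUnit (2 : R)) :
    IsCoprime (a - b) (a + b) := by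
  obtain ⟨u, v, huv⟩ := hab
  obtain ⟨t, ht⟩ := h2.exists_left_inv
  exact ⟨t * (u - v), t * (u + v), by linear_combination t * 2 * huv + ht⟩

theorem isCoprime_of_sq_add_sq_eq_sq {a b c : R} (h : a ^ 2 + b ^ 2 = c ^ 2)
    (hac : IsCoprime a c) : IsCoprime a b ∧ IsCoprime b c := by
  constructor
  · have : IsCoprime a (c ^ 2 + a * (-a)) := hac.pow_right.add_mul_left_right (-a)
    rwa [show c ^ 2 + a * (-a) = b ^ 2 by linear_combination -h,
      IsCoprime.pow_right_iff two_pos] at this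
  · have : IsCoprime (-a ^ 2 + c * c) c := hac.pow_left.neg_left.add_mul_left_left c
    rwa [show -a ^ 2 + c * c = b ^ 2 by linear_combination -h,
      IsCoprime.pow_left_iff two_pos] at this

theorem isCoprime_pow_mul_pow_mul {a c w : R} {i j x z : ℕ} (hac : IsCoprime a c)
    (hwa : IsCoprime w a) (hwc : IsCoprime w c) (hij : i = 0 ∨ j = 0) :
    IsCoprime (w ^ i * a ^ x) (w ^ j * c ^ z) := by
  rcases hij with rfl | rfl
  · simpa only [pow_zero, one_mul] using hwa.symm.pow.mul_right hac.pow
  · simpa only [pow_zero, one_mul] using hwc.pow.mul_left hac.pow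

theorem exists_pow_mul_eq_pow_of_mul_pow_add_mul_pow_eq [IsDomain R] {a b c w : R} {m x y z : ℕ}
    (hw : w ≠ 0) (hym : y ≤ m) (hmx : m ≤ x) (hmz : m ≤ z)
    (h : (w * a) ^ x + (w * b) ^ y = (w * c) ^ z) :
    ∃ d, w ^ (m - y) * d = b ^ y ∧ w ^ (x - m) * a ^ x + d = w ^ (z - m) * c ^ z := by
  refine ⟨w ^ (z - m) * c ^ z - w ^ (x - m) * a ^ x, ?_, add_sub_cancel _ _⟩
  obtain ⟨k, rfl⟩ := Nat.exists_eq_add_of_le hym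
  obtain ⟨i, rfl⟩ := Nat.exists_eq_add_of_le hmx
  obtain ⟨j, rfl⟩ := Nat.exists_eq_add_of_le hmz
  simp only [Nat.add_sub_cancel_left]
  apply mul_left_cancel₀ (pow_ne_zero y hw)
  linear_combination -h

end CommRing

section MasonStothers

variable {K : Type*} [Field K] [CharZero K]

theorem natDegree_lt_of_add_eq_of_dvd_pow {a b c p : K[X]} {l m n : ℕ} (hab : IsCoprime a b)
    (habc : a + b = c) (hp : 0 < p.natDegree) (ha : a ∣ p ^ l) (hb : b ∣ p ^ m) (hc : c ∣ p ^ n) :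
    a.natDegree < p.natDegree ∧ b.natDegree < p.natDegree ∧ c.natDegree < p.natDegree := by
  classical
  have hp0 : p ≠ 0 := ne_zero_of_natDegree_gt hp
  have ha0 : a ≠ 0 := ne_zero_of_dvd_ne_zero (pow_ne_zero l hp0) ha
  have hb0 : b ≠ 0 := ne_zero_of_dvd_ne_zero (pow_ne_zero m hp0) hb
  have hc0 : -c ≠ 0 := neg_ne_zero.2 (ne_zero_of_dvd_ne_zero (pow_ne_zero n hp0) hc)
  have hdvd : a * b * -c ∣ p ^ (l + m + n) := by
    simpa only [pow_add] using mul_dvd_mul (mul_dvd_mul ha hb) (neg_dvd.2 hc)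
  have hrad : (UniqueFactorizationMonoid.radical (a * b * -c)).natDegree ≤ p.natDegree :=
    natDegree_le_of_dvd ((UniqueFactorizationMonoid.exists_dvd_pow_iff_radical_dvd
      (mul_ne_zero (mul_ne_zero ha0 hb0) hc0)).1 ⟨_, hdvd⟩) hp0
  rw [← natDegree_neg c]
  rcases Polynomial.abc ha0 hb0 hc0 hab (by rw [habc, add_neg_cancel]) with
    ⟨ha', hb', hc'⟩ | ⟨ha', hb', hc'⟩
  · exact ⟨ha'.trans hrad, hb'.trans hrad, hc'.trans hrad⟩
  · simpa only [derivative_eq_zero.1 ha', derivative_eq_zero.1 hb', derivative_eq_zero.1 hc',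
      and_self] using hp

variable {A B C w : K[X]} {x y z : ℕ}

theorem natDegree_lt_of_pow_mul_pow_add_eq {D : K[X]} {i j : ℕ}
    (hABC : 0 < (A * B * C).natDegree) (hAC : IsCoprime A C) (hwA : IsCoprime w A)
    (hwC : IsCoprime w C) (hwB : w ∣ B ^ y) (hDB : D ∣ B ^ y) (hij : i = 0 ∨ j = 0)
    (hD : w ^ i * A ^ x + D = w ^ j * C ^ z) :
    (w ^ i * A ^ x).natDegree < (A * B * C).natDegree ∧
      D.natDegree < (A * B * C).natDegree ∧
      (w ^ j * C ^ z).natDegree < (A * B * C).natDegree := by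
  have hBdvd : B ^ y ∣ (A * B * C) ^ y := pow_dvd_pow_of_dvd ⟨A * C, by ring⟩ y
  have hpow (k n : ℕ) {p : K[X]} (hp : p ∣ A * B * C) :
      w ^ k * p ^ n ∣ (A * B * C) ^ (y * k + n) := by
    rw [pow_add, pow_mul]
    exact mul_dvd_mul (pow_dvd_pow_of_dvd (hwB.trans hBdvd) k) (pow_dvd_pow_of_dvd hp n)
  have hcop : IsCoprime (w ^ i * A ^ x) D := by
    apply IsCoprime.of_add_mul_left_right (z := 1)
    rw [mul_one, add_comm, hD]
    exact isCoprime_pow_mul_pow_mul hAC hwA hwC hij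
  exact natDegree_lt_of_add_eq_of_dvd_pow hcop hD hABC (hpow i x ⟨B * C, by ring⟩)
    (hDB.trans hBdvd) (hpow j z (dvd_mul_left C _))

theorem natDegree_bounds_of_mul_pow_add_mul_pow_eq (hB : B ≠ 0) (hAB : IsCoprime A B)
    (hBC : IsCoprime B C) (hAC : IsCoprime A C) (hw : 0 < w.natDegree)
    (heq : (w * A) ^ x + (w * B) ^ y = (w * C) ^ z) (hlt : y < min x z) :
    x * A.natDegree ≤ A.natDegree + B.natDegree + C.natDegree - 1 ∧
      y * B.natDegree < A.natDegree + B.natDegree + C.natDegree + min x z * w.natDegree - 1 ∧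
      z * C.natDegree ≤ A.natDegree + B.natDegree + C.natDegree - 1 := by
  have hw0 : w ≠ 0 := ne_zero_of_natDegree_gt hw
  have hwu : ¬IsUnit w := not_isUnit_of_natDegree_pos w hw
  obtain ⟨D, hBD, hD⟩ := exists_pow_mul_eq_pow_of_mul_pow_add_mul_pow_eq hw0 hlt.le
    (min_le_left x z) (min_le_right x z) heq
  have hwB : w ∣ B ^ y := hBD ▸ (dvd_pow_self w (Nat.sub_ne_zero_of_lt hlt)).mul_right D
  have hwA : IsCoprime w A := hAB.symm.pow_left.of_isCoprime_of_dvd_left hwB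
  have hwC : IsCoprime w C := hBC.pow_left.of_isCoprime_of_dvd_left hwB
  have hA : A ≠ 0 := by rintro rfl; exact hwu (isCoprime_zero_right.1 hwA)
  have hC : C ≠ 0 := by rintro rfl; exact hwu (isCoprime_zero_right.1 hwC)
  have hD0 : D ≠ 0 := right_ne_zero_of_mul (hBD ▸ pow_ne_zero y hB)
  have hyB : 0 < y * B.natDegree := by
    rw [← natDegree_pow]
    exact hw.trans_le (natDegree_le_of_dvd hwB (pow_ne_zero y hB))
  have hB_pos : 0 < B.natDegree := Nat.pos_of_mul_pos_left hyB
  have hyw : 0 < y * w.natDegree := Nat.mul_pos (Nat.pos_of_mul_pos_right hyB) hw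
  have hABC : (A * B * C).natDegree = A.natDegree + B.natDegree + C.natDegree := by
    rw [natDegree_mul (mul_ne_zero hA hB) hC, natDegree_mul hA hB]
  have hyB_eq : y * B.natDegree + y * w.natDegree = min x z * w.natDegree + D.natDegree := by
    rw [← natDegree_pow, ← hBD, natDegree_mul (pow_ne_zero _ hw0) hD0, natDegree_pow,
      add_right_comm, ← add_mul, Nat.sub_add_cancel hlt.le]
  obtain ⟨hAx, hDlt, hCz⟩ := natDegree_lt_of_pow_mul_pow_add_eq (by omega) hAC hwA hwC hwB
    (hBD ▸ dvd_mul_left D _) (by omega) hD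
  rw [natDegree_mul (pow_ne_zero _ hw0) (pow_ne_zero _ hA), natDegree_pow A] at hAx
  rw [natDegree_mul (pow_ne_zero _ hw0) (pow_ne_zero _ hC), natDegree_pow C] at hCz
  refine ⟨?_, ?_, ?_⟩ <;> omega

theorem jesmanowicz_poly_noncoprime_bounds_y_general {f g : K[X]} (hf : f ≠ 0) (hg : g ≠ 0)
    (hfg : IsCoprime f g) (hw : 0 < w.natDegree)
    (heq : (w * (f ^ 2 - g ^ 2)) ^ x + (w * (2 * f * g)) ^ y = (w * (f ^ 2 + g ^ 2)) ^ z)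
    (hlt : y < min x z) :
    x * (f ^ 2 - g ^ 2).natDegree ≤
        (f ^ 2 - g ^ 2).natDegree + (2 * f * g).natDegree + (f ^ 2 + g ^ 2).natDegree - 1 ∧
      y * (2 * f * g).natDegree <
        (f ^ 2 - g ^ 2).natDegree + (2 * f * g).natDegree + (f ^ 2 + g ^ 2).natDegree +
          (min x z) * w.natDegree - 1 ∧
      z * (f ^ 2 + g ^ 2).natDegree ≤
        (f ^ 2 - g ^ 2).natDegree + (2 * f * g).natDegree + (f ^ 2 + g ^ 2).natDegree - 1 := by
  have h2 : IsUnit (2 : K[X]) := by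
    simpa only [map_ofNat] using (IsUnit.mk0 (2 : K) two_ne_zero).map Polynomial.C
  have hAC : IsCoprime (f ^ 2 - g ^ 2) (f ^ 2 + g ^ 2) := isCoprime_sub_add hfg.pow h2
  obtain ⟨hAB, hBC⟩ := isCoprime_of_sq_add_sq_eq_sq (b := 2 * f * g) (by ring) hAC
  exact natDegree_bounds_of_mul_pow_add_mul_pow_eq (mul_ne_zero (mul_ne_zero h2.ne_zero hf) hg)
    hAB hBC hAC hw heq hlt

end MasonStothers

theorem jesmanowicz_poly_noncoprime_bounds_y
    {K : Type*} [Field K] [CharZero K] [IsAlgClosed K]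
    (f g w : K[X])
    (hf : 0 < f.natDegree) (hg : 0 < g.natDegree)
    (hfg : IsCoprime f g) (hw : 0 < w.natDegree)
    (x y z : ℕ) (hx : 0 < x) (hy : 0 < y) (hz : 0 < z)
    (heq : (w * (f ^ 2 - g ^ 2)) ^ x + (w * (2 * f * g)) ^ y = (w * (f ^ 2 + g ^ 2)) ^ z)
    (hlt : y < min x z) :
    x * (f ^ 2 - g ^ 2).natDegree ≤
        (f ^ 2 - g ^ 2).natDegree + (2 * f * g).natDegree + (f ^ 2 + g ^ 2).natDegree - 1 ∧
      y * (2 * f * g).natDegree <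
        (f ^ 2 - g ^ 2).natDegree + (2 * f * g).natDegree + (f ^ 2 + g ^ 2).natDegree +
          (min x z) * w.natDegree - 1 ∧
      z * (f ^ 2 + g ^ 2).natDegree ≤
        (f ^ 2 - g ^ 2).natDegree + (2 * f * g).natDegree + (f ^ 2 + g ^ 2).natDegree - 1 :=
  jesmanowicz_poly_noncoprime_bounds_y_general (ne_zero_of_natDegree_gt hf)
    (ne_zero_of_natDegree_gt hg) hfg hw heq hlt
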